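/- arXiv:1304.0114 — 4 statements merged into one kernel-verified Lean document; each statement's English description precedes it below -/
import Mathlib

section
/- The universal enveloping algebra U(W₊) of the positive Witt algebra W₊ is neither left noetherian nor right noetherian. -/
/-!
Statement 0: The universal enveloping algebra U(W₊) of the positive Witt algebra W₊
is neither left noetherian nor right noetherian.

Here `k` is a field of characteristic 0, and the positive Witt algebra is realized as the
Lie subalgebra of the Lie algebra of k-linear derivations of `k[x]` spanned by the derivations
`e n = x^(n+1) d/dx` for `n ≥ 1`.  Right noetherianity of a ring `A` is expressed as left
noetherianity of the opposite ring `Aᵐᵒᵖ`.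
-/

noncomputable section

open Polynomial

/-- The derivation `e n = x^(n+1) d/dx` of `k[x]`. -/
def wittGen (k : Type*) [Field k] (n : ℕ) : Derivation k k[X] k[X] :=
  (X : k[X]) ^ (n + 1) • Polynomial.derivative'

/-- The positive Witt algebra `W₊`, i.e. the Lie subalgebra of derivations of `k[x]`
spanned by `e n = x^(n+1) d/dx` for `n ≥ 1`. -/
def positiveWitt (k : Type*) [Field k] : LieSubalgebra k (Derivation k k[X] k[X]) :=
  LieSubalgebra.lieSpan k _ {d | ∃ n : ℕ, 1 ≤ n ∧ d = wittGen k n}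

/-!
The algebra `W₊` acts on `k[x] ⊕ k ℓ`, where vector fields act naturally on `k[x]` and by
`d · ℓ = div d` on the symbol `ℓ`. In this module `e_m e_{m+2} - e_{m+1}² - e_{2m+2}` annihilates
`k[x]` and sends `ℓ` to `x^(2m+2)`. Hence the right ideals of those `u ∈ U(W₊)` for which the
`k[x]`-part of `u · v` has degree less than `2n` for all `v` form a chain that increases strictly
from `n = 2` on, and the antipode of `U(W₊)` turns it into a chain of left ideals.
-/

attribute [local instance] LieRing.ofAssociativeRing

section RangeIdeal

variable {R M A : Type*} [Semiring R] [AddCommMonoid M] [Module R M] [Semiring A]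

/-- The right ideal of a ring `A` acting on a module `M` through `ρ` that consists of the elements
mapping `M` into the submodule `P`; it is encoded as a left ideal of `Aᵐᵒᵖ`. -/
def rangeIdeal (ρ : A →+* Module.End R M) (P : Submodule R M) : Ideal Aᵐᵒᵖ where
  carrier := {a | ∀ v, ρ a.unop v ∈ P}
  add_mem' ha hb v := by simpa using P.add_mem (ha v) (hb v)
  zero_mem' v := by simp
  smul_mem' c a ha v := by simpa using ha (ρ c.unop v)

theorem op_mem_rangeIdeal {ρ : A →+* Module.End R M} {P : Submodule R M} {a : A} :
    MulOpposite.op a ∈ rangeIdeal ρ P ↔ ∀ v, ρ a v ∈ P :=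
  Iff.rfl

theorem rangeIdeal_mono (ρ : A →+* Module.End R M) : Monotone (rangeIdeal ρ) :=
  fun _ _ hPQ _ ha v => hPQ (ha v)

theorem not_isNoetherianRing_op_of_range (ρ : A →+* Module.End R M) {P : ℕ → Submodule R M}
    (hP : Monotone P) (a : ℕ → A) (mem_succ : ∀ n v, ρ (a n) v ∈ P (n + 1))
    (exists_notMem : ∀ n, ∃ v, ρ (a n) v ∉ P n) : ¬ IsNoetherianRing Aᵐᵒᵖ := by
  intro _
  refine not_strictMono_of_wellFoundedGT (fun n => rangeIdeal ρ (P n))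
    (strictMono_nat_of_lt_succ fun n => SetLike.lt_iff_le_and_exists.mpr
      ⟨rangeIdeal_mono ρ (hP n.le_succ), MulOpposite.op (a n),
        op_mem_rangeIdeal.mpr (mem_succ n), fun h => ?_⟩)
  obtain ⟨v, hv⟩ := exists_notMem n
  exact hv (op_mem_rangeIdeal.mp h v)

end RangeIdeal

section Antipode

variable (R L : Type*) [CommRing R] [LieRing L] [LieAlgebra R L]

/-- The antipode `x ↦ -x`, `x ∈ L`, of the enveloping algebra of `L`, as a homomorphism to the
opposite algebra. -/
def envelopingAntipodeHom :
    UniversalEnvelopingAlgebra R L →ₐ[R] (UniversalEnvelopingAlgebra R L)ᵐᵒᵖ :=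
  UniversalEnvelopingAlgebra.lift R
    { toFun x := -MulOpposite.op (UniversalEnvelopingAlgebra.ι R x)
      map_add' x y := by simp [add_comm]
      map_smul' c x := by simp
      map_lie' {x y} := by simp [Ring.lie_def, -UniversalEnvelopingAlgebra.ι_apply] }

variable {L} in
theorem envelopingAntipodeHom_ι (x : L) :
    envelopingAntipodeHom R L (UniversalEnvelopingAlgebra.ι R x) =
      -MulOpposite.op (UniversalEnvelopingAlgebra.ι R x) :=
  UniversalEnvelopingAlgebra.lift_ι_apply R _ x

theorem envelopingAntipodeHom_involutive :
    (AlgHom.opComm (envelopingAntipodeHom R L)).comp (envelopingAntipodeHom R L) =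
      AlgHom.id R _ := by
  ext x
  simp [envelopingAntipodeHom_ι, -UniversalEnvelopingAlgebra.ι_apply]

/-- The antipode of an enveloping algebra, as an isomorphism with the opposite algebra. -/
def envelopingAntipode :
    UniversalEnvelopingAlgebra R L ≃ₐ[R] (UniversalEnvelopingAlgebra R L)ᵐᵒᵖ :=
  AlgEquiv.ofAlgHom (envelopingAntipodeHom R L) (AlgHom.opComm (envelopingAntipodeHom R L))
    (AlgHom.ext fun a => MulOpposite.unop_injective <|
      DFunLike.congr_fun (envelopingAntipodeHom_involutive R L) a.unop)
    (envelopingAntipodeHom_involutive R L)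

theorem isNoetherianRing_enveloping_op_iff :
    IsNoetherianRing (UniversalEnvelopingAlgebra R L)ᵐᵒᵖ ↔
      IsNoetherianRing (UniversalEnvelopingAlgebra R L) :=
  ⟨fun _ => isNoetherianRing_of_ringEquiv _ (envelopingAntipode R L).symm.toRingEquiv,
    fun _ => isNoetherianRing_of_ringEquiv _ (envelopingAntipode R L).toRingEquiv⟩

end Antipode

section CocycleExtension

variable {R L M : Type*} [CommRing R] [LieRing L] [LieAlgebra R L] [AddCommGroup M] [Module R M]
  [LieRingModule L M] [LieModule R L M]

/-- The extension of the trivial representation by the `L`-module `M` given by a 1-cocycle `D` (in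
Mathlib, a Lie derivation `L → M`): `x` acts on `M × R` by `(v, r) ↦ (⁅x, v⁆ + r • D x, 0)`. -/
def cocycleExtension (D : LieDerivation R L M) : L →ₗ⁅R⁆ Module.End R (M × R) where
  toFun x := .inl R M R ∘ₗ (LieModule.toEnd R L M x).coprod (.toSpanSingleton R M (D x))
  map_add' x y := by
    ext <;> simp
  map_smul' c x := by
    ext <;> simp
  map_lie' {x y} := by
    ext <;> simp [Ring.lie_def]

theorem cocycleExtension_apply (D : LieDerivation R L M) (x : L) (v : M × R) :
    cocycleExtension D x v = (⁅x, v.1⁆ + v.2 • D x, 0) :=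
  rfl

end CocycleExtension

section Divergence

theorem derivation_apply_eq_derivative_smul {R A : Type*} [CommSemiring R] [AddCommMonoid A]
    [Module R A] [Module R[X] A] [IsScalarTower R R[X] A] (d : Derivation R R[X] A) (f : R[X]) :
    d f = derivative f • d X := by
  rw [← mkDerivation_apply R, ← mkDerivationEquiv_symm_apply, ← mkDerivationEquiv_apply,
    LinearEquiv.apply_symm_apply]

/-- The divergence `f d/dx ↦ f'` of polynomial vector fields on the line, as a 1-cocycle. -/
def divergence (R : Type*) [CommRing R] :
    LieDerivation R (Derivation R R[X] R[X]) R[X] where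
  toFun d := derivative (d X)
  map_add' d₁ d₂ := by simp
  map_smul' c d := by simp
  leibniz' d₁ d₂ := by
    obtain ⟨f₁, h₁⟩ : ∃ f, ∀ p, d₁ p = derivative p • f :=
      ⟨_, derivation_apply_eq_derivative_smul d₁⟩
    obtain ⟨f₂, h₂⟩ : ∃ f, ∀ p, d₂ p = derivative p • f :=
      ⟨_, derivation_apply_eq_derivative_smul d₂⟩
    simp only [LinearMap.coe_mk, AddHom.coe_mk, Derivation.commutator_apply,
      Derivation.bracket_eq_fun, h₁, h₂, smul_eq_mul, derivative_X, one_mul, derivative_sub,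
      derivative_mul]
    ring

end Divergence

section DivergenceRep

variable {R : Type*} [CommRing R] {L : LieSubalgebra R (Derivation R R[X] R[X])}

/-- The action of `U(L)`, for a Lie algebra `L` of polynomial vector fields on the line, on the
extension of the trivial representation by `R[X]` given by the divergence. -/
def envelopingDivergenceRep (L : LieSubalgebra R (Derivation R R[X] R[X])) :
    UniversalEnvelopingAlgebra R L →ₐ[R] Module.End R (R[X] × R) :=
  UniversalEnvelopingAlgebra.lift R ((cocycleExtension (divergence R)).comp L.incl)

theorem envelopingDivergenceRep_ι {f : R[X]} (hf : f • derivative' ∈ L) (v : R[X] × R) :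
    envelopingDivergenceRep L (UniversalEnvelopingAlgebra.ι R ⟨f • derivative', hf⟩) v =
      (f * derivative v.1 + v.2 • derivative f, 0) := by
  rw [envelopingDivergenceRep, UniversalEnvelopingAlgebra.lift_ι_apply]
  simp [cocycleExtension_apply, divergence]

/-- The element `e_i e_{i+2} - e_{i+1}² - e_{2i+2}` of `U(L)` for `i = m + 1`; the local `e n`,
indexed from `0`, is `e_{n+1} = x^(n+2) d/dx`. The linear term is chosen to cancel the
first-order part of the difference of products on `R[X]`. -/
def wittQuadric (hL : ∀ n, (X ^ (n + 2) : R[X]) • derivative' ∈ L) (m : ℕ) :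
    UniversalEnvelopingAlgebra R L :=
  let e n := UniversalEnvelopingAlgebra.ι R (⟨_, hL n⟩ : L)
  e m * e (m + 2) - e (m + 1) ^ 2 - e (2 * m + 3)

theorem envelopingDivergenceRep_wittQuadric
    (hL : ∀ n, (X ^ (n + 2) : R[X]) • derivative' ∈ L) (m : ℕ) (v : R[X] × R) :
    envelopingDivergenceRep L (wittQuadric hL m) v = (v.2 • X ^ (2 * m + 4), 0) := by
  ext1
  · simp only [wittQuadric, sq, map_sub, map_mul, LinearMap.sub_apply, Module.End.mul_apply,
      envelopingDivergenceRep_ι, Prod.fst_sub, smul_eq_C_mul, derivative_mul, map_add,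
      derivative_X_pow, derivative_C, derivative_natCast, map_natCast, C_0]
    push_cast
    ring
  · simp [wittQuadric, sq, envelopingDivergenceRep_ι, -UniversalEnvelopingAlgebra.ι_apply]

end DivergenceRep

theorem enveloping_not_isNoetherianRing_op {R : Type*} [CommRing R] [Nontrivial R]
    {L : LieSubalgebra R (Derivation R R[X] R[X])}
    (hL : ∀ n, (X ^ (n + 2) : R[X]) • derivative' ∈ L) :
    ¬ IsNoetherianRing (UniversalEnvelopingAlgebra R L)ᵐᵒᵖ := by
  let P (n : ℕ) : Submodule R (R[X] × R) := (degreeLT R (2 * n + 4)).comap (.fst R R[X] R)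
  have hP : Monotone P := fun _ _ h => Submodule.comap_mono (degreeLT_mono (by omega))
  refine not_isNoetherianRing_op_of_range (envelopingDivergenceRep L).toRingHom hP
    (wittQuadric hL) (fun n v => ?_) (fun n => ⟨(0, 1), ?_⟩)
  · have hdeg : (X ^ (2 * n + 4) : R[X]) ∈ degreeLT R (2 * (n + 1) + 4) := by
      rw [mem_degreeLT, degree_X_pow]
      exact_mod_cast (by omega : 2 * n + 4 < 2 * (n + 1) + 4)
    simpa [P, envelopingDivergenceRep_wittQuadric] using Submodule.smul_mem _ v.2 hdeg
  · simp [P, envelopingDivergenceRep_wittQuadric, mem_degreeLT]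

theorem positiveWitt_enveloping_not_noetherian_general {R : Type*} [CommRing R] [Nontrivial R]
    {L : LieSubalgebra R (Derivation R R[X] R[X])}
    (hL : ∀ n, (X ^ (n + 2) : R[X]) • derivative' ∈ L) :
    ¬ IsNoetherianRing (UniversalEnvelopingAlgebra R L) ∧
      ¬ IsNoetherianRing (UniversalEnvelopingAlgebra R L)ᵐᵒᵖ := by
  rw [isNoetherianRing_enveloping_op_iff, and_self]
  exact mt (isNoetherianRing_enveloping_op_iff R L).mpr (enveloping_not_isNoetherianRing_op hL)

theorem positiveWitt_enveloping_not_noetherian (k : Type*) [Field k] [CharZero k] :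
    ¬ IsNoetherianRing (UniversalEnvelopingAlgebra k (positiveWitt k)) ∧
      ¬ IsNoetherianRing (UniversalEnvelopingAlgebra k (positiveWitt k))ᵐᵒᵖ :=
  positiveWitt_enveloping_not_noetherian_general fun n =>
    LieSubalgebra.subset_lieSpan ⟨n + 1, by omega, rfl⟩

end
end

section
/- The universal enveloping algebra U(W) of the Witt algebra W is neither left noetherian nor right noetherian. -/
/-!
Statement 1: The universal enveloping algebra U(W) of the Witt algebra W is neither left
noetherian nor right noetherian.

Here `k` is a field of characteristic 0 and the Witt algebra is realized as the Lie algebra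
of all k-linear derivations of the Laurent polynomial ring `k[x, x⁻¹]`.  Right noetherianity
of a ring `A` is expressed as left noetherianity of the opposite ring `Aᵐᵒᵖ`.
-/

noncomputable section

/-- The Witt algebra: the Lie algebra of all `k`-linear derivations of `k[x,x⁻¹]`. -/
abbrev wittAlgebra (k : Type*) [Field k] :=
  Derivation k (LaurentPolynomial k) (LaurentPolynomial k)

/-!
The Witt algebra acts on the densities `f · (dx/x) ^ ε` with `ε ^ 2 = 0`, so an element `u` of the
enveloping algebra acts as `u₀ + ε u₁`. Since `u₀` maps `1` to a scalar multiple of `1`, every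
finite set of generators of the right ideal `{u | u₀ = 0}` gives finitely many generators of the
module `{u₁ 1 | u₀ = 0}`. But `e_{n-1} e_1 - 2 e_n e_0 + e_{n+1} e_{-1}` lies in this ideal and maps
`1` to `2 ε x ^ n`, for every `n`. The left-hand case reduces to the right-hand one through the
anti-automorphism of the enveloping algebra that extends `x ↦ -x` on the Witt algebra.
-/

open LaurentPolynomial MulOpposite Submodule
open scoped DualNumber

attribute [local instance] LieRing.ofAssociativeRing

section EnvelopingAlgebra

variable (R L : Type*) [CommRing R] [LieRing L] [LieAlgebra R L]

local notation "U" => UniversalEnvelopingAlgebra R L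
local notation "ι" => UniversalEnvelopingAlgebra.ι R

theorem envelopingAlgebra_adjoin_range_ι : Algebra.adjoin R (Set.range (ι : L → U)) = ⊤ := by
  have mk_surjective : Function.Surjective (UniversalEnvelopingAlgebra.mkAlgHom R L) :=
    RingCon.mkₐ_surjective _
  rw [← (AlgHom.range_eq_top _).2 mk_surjective, ← Algebra.map_top,
    ← TensorAlgebra.adjoin_range_ι, AlgHom.map_adjoin, ← Set.range_comp]
  rfl

/-- The principal anti-automorphism of the enveloping algebra, induced by `x ↦ -x` on the Lie
algebra, encoded as a homomorphism to the opposite algebra. -/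
def principalAntiHom : U →ₐ[R] Uᵐᵒᵖ :=
  UniversalEnvelopingAlgebra.lift R
    { toFun x := op (-ι x)
      map_add' x y := by rw [map_add, neg_add, op_add]
      map_smul' r x := by rw [map_smul, ← smul_neg, op_smul, RingHom.id_apply]
      map_lie' {x y} := by
        simp only [LieHom.map_lie, LieRing.of_associative_ring_bracket, ← op_mul, ← op_sub,
          neg_mul_neg, neg_sub] }

theorem principalAntiHom_ι (x : L) : principalAntiHom R L (ι x) = op (-ι x) :=
  UniversalEnvelopingAlgebra.lift_ι_apply R _ x

theorem principalAntiHom_unop_principalAntiHom (u : U) :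
    principalAntiHom R L (principalAntiHom R L u).unop = op u := by
  suffices (principalAntiHom R L).opComm.comp (principalAntiHom R L) = AlgHom.id R U from
    congrArg op (DFunLike.congr_fun this u)
  ext x
  change (principalAntiHom R L (principalAntiHom R L (ι x)).unop).unop = ι x
  simp only [principalAntiHom_ι, map_neg, unop_op, unop_neg, neg_neg]

theorem isNoetherianRing_op_envelopingAlgebra [IsNoetherianRing U] : IsNoetherianRing Uᵐᵒᵖ :=
  isNoetherianRing_of_surjective _ _ (principalAntiHom R L).toRingHom fun u =>
    ⟨_, principalAntiHom_unop_principalAntiHom R L u.unop⟩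

variable {R L} in
theorem envelopingAlgebra_apply_invariant {M : Type*} [AddCommGroup M] [Module R M]
    (φ : U →ₐ[R] Module.End R M) {m : M} (hm : ∀ x, φ (ι x) m = 0) (u : U) :
    φ u m = UniversalEnvelopingAlgebra.lift R (0 : L →ₗ⁅R⁆ R) u • m := by
  have hu : u ∈ Algebra.adjoin R (Set.range (ι : L → U)) :=
    envelopingAlgebra_adjoin_range_ι R L ▸ Algebra.mem_top
  induction hu using Algebra.adjoin_induction with
  | mem _ h =>
    obtain ⟨x, rfl⟩ := h
    rw [hm, UniversalEnvelopingAlgebra.lift_ι_apply, LieHom.zero_apply, zero_smul]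
  | algebraMap r =>
    simp only [AlgHom.commutes, Module.algebraMap_end_apply, Algebra.algebraMap_self_apply]
  | add u v _ _ hu hv => simp only [map_add, LinearMap.add_apply, hu, hv, add_smul]
  | mul u v _ _ hu hv =>
    simp only [map_mul, Module.End.mul_apply, hv, map_smul, hu, smul_smul, mul_comm]

end EnvelopingAlgebra

section FirstOrderValues

variable {R A M : Type*} [CommRing R] [Ring A] [Algebra R A] [AddCommGroup M] [Module R M]

/-- For a first-order deformation `φ = φ₀ + ε φ₁` of a representation of `A` on `M`, the values at
`m` of the operators `φ₁ a` with `φ₀ a = 0`. -/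
def firstOrderValues (φ : A →ₐ[R] (Module.End R M)[ε]) (m : M) : Submodule R M where
  carrier := {y | ∃ a, (φ a).fst = 0 ∧ (φ a).snd m = y}
  add_mem' := by
    rintro _ _ ⟨a, ha, rfl⟩ ⟨b, hb, rfl⟩
    exact ⟨a + b, by simp [ha, hb], by simp⟩
  zero_mem' := ⟨0, by simp, by simp⟩
  smul_mem' := by
    rintro r _ ⟨a, ha, rfl⟩
    exact ⟨r • a, by simp [ha], by simp⟩

theorem snd_apply_mul_of_fst_eq_zero (φ : A →ₐ[R] (Module.End R M)[ε]) {a b : A} {m : M} {r : R}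
    (ha : (φ a).fst = 0) (hb : (φ b).fst m = r • m) :
    (φ (a * b)).snd m = r • (φ a).snd m := by
  simp [ha, hb]

theorem fg_firstOrderValues [IsNoetherianRing Aᵐᵒᵖ] {φ : A →ₐ[R] (Module.End R M)[ε]} {m : M}
    (hm : ∀ a, (φ a).fst m ∈ R ∙ m) : (firstOrderValues φ m).FG := by
  let J : Ideal Aᵐᵒᵖ := RingHom.ker ((TrivSqZeroExt.fstHom R _ _).comp φ).toRingHom.op
  have mem_J (a : Aᵐᵒᵖ) : a ∈ J ↔ (φ a.unop).fst = 0 := op_eq_zero_iff _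
  obtain ⟨S, hS : span Aᵐᵒᵖ (S : Set Aᵐᵒᵖ) = J⟩ := IsNoetherian.noetherian J
  suffices firstOrderValues φ m = span R ((fun a : Aᵐᵒᵖ => (φ a.unop).snd m) '' S) from
    this ▸ fg_span (S.finite_toSet.image _)
  have snd_mem_span : ∀ a ∈ span Aᵐᵒᵖ (S : Set Aᵐᵒᵖ),
      (φ a.unop).snd m ∈ span R ((fun a : Aᵐᵒᵖ => (φ a.unop).snd m) '' S) := by
    intro a ha
    induction ha using span_induction with
    | mem s hs => exact subset_span ⟨s, hs, rfl⟩
    | zero => simp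
    | add s t _ _ hs ht => simpa using add_mem hs ht
    | smul b s hs ih =>
      obtain ⟨r, hr⟩ := mem_span_singleton.1 (hm b.unop)
      have hs₀ : (φ s.unop).fst = 0 := (mem_J s).1 (hS ▸ hs)
      exact snd_apply_mul_of_fst_eq_zero φ hs₀ hr.symm ▸ smul_mem _ r ih
  refine le_antisymm ?_ (span_le.2 ?_)
  · rintro _ ⟨a, ha, rfl⟩
    exact snd_mem_span (op a) (hS.symm ▸ (mem_J (op a)).2 ha)
  · rintro _ ⟨s, hs, rfl⟩
    exact ⟨s.unop, (mem_J s).1 (hS ▸ subset_span hs), rfl⟩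

end FirstOrderValues

section Deformation

variable {R L M : Type*} [CommRing R] [LieRing L] [LieAlgebra R L]
  [AddCommGroup M] [Module R M] [LieRingModule L M] [LieModule R L M]

/-- The first-order deformation of a Lie module along a 1-cocycle with values in its endomorphisms.
A 1-cocycle is encoded as a `LieDerivation`. -/
def infinitesimalDeformation (c : LieDerivation R L (Module.End R M)) :
    L →ₗ⁅R⁆ (Module.End R M)[ε] where
  toFun x := .inl (LieModule.toEnd R L M x) + .inr (c x)
  map_add' x y := by ext <;> simp
  map_smul' r x := by ext <;> simp
  map_lie' {x y} := by
    rw [LieRing.of_associative_ring_bracket]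
    ext m
    · simp
    · simp only [LieHom.map_lie, LieDerivation.apply_lie_eq_sub, LieHom.lie_apply,
        LieModule.toEnd_apply_apply, TrivSqZeroExt.snd_add, TrivSqZeroExt.snd_sub,
        TrivSqZeroExt.snd_mul, TrivSqZeroExt.snd_inl, TrivSqZeroExt.snd_inr,
        TrivSqZeroExt.fst_add, TrivSqZeroExt.fst_inl, TrivSqZeroExt.fst_inr, smul_eq_mul,
        op_smul_eq_mul, add_zero, zero_add, LinearMap.add_apply, LinearMap.sub_apply,
        LieRing.of_associative_ring_bracket, Module.End.mul_apply]
      abel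

/-- The action of the enveloping algebra on the first-order deformation of a Lie module along a
1-cocycle. -/
def deformedAction (c : LieDerivation R L (Module.End R M)) :
    UniversalEnvelopingAlgebra R L →ₐ[R] (Module.End R M)[ε] :=
  UniversalEnvelopingAlgebra.lift R (infinitesimalDeformation c)

variable (c : LieDerivation R L (Module.End R M))

theorem fst_deformedAction_ι (x : L) :
    (deformedAction c (UniversalEnvelopingAlgebra.ι R x)).fst = LieModule.toEnd R L M x := by
  rw [deformedAction, UniversalEnvelopingAlgebra.lift_ι_apply]
  simp [infinitesimalDeformation]

theorem snd_deformedAction_ι (x : L) :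
    (deformedAction c (UniversalEnvelopingAlgebra.ι R x)).snd = c x := by
  rw [deformedAction, UniversalEnvelopingAlgebra.lift_ι_apply]
  simp [infinitesimalDeformation]

theorem fg_firstOrderValues_deformedAction
    [IsNoetherianRing (UniversalEnvelopingAlgebra R L)ᵐᵒᵖ] {m : M} (hm : ∀ x : L, ⁅x, m⁆ = 0) :
    (firstOrderValues (deformedAction c) m).FG := by
  refine fg_firstOrderValues fun u => mem_span_singleton.2
    ⟨UniversalEnvelopingAlgebra.lift R (0 : L →ₗ⁅R⁆ R) u, Eq.symm ?_⟩
  refine envelopingAlgebra_apply_invariant ((TrivSqZeroExt.fstHom R _ _).comp (deformedAction c))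
    (fun x => ?_) u
  change (deformedAction c (UniversalEnvelopingAlgebra.ι R x)).fst m = 0
  rw [fst_deformedAction_ι, LieModule.toEnd_apply_apply, hm]

end Deformation

section DerivationCocycle

variable {R A : Type*} [CommRing R] [CommRing A] [Algebra R A]

/-- The 1-cocycle `d ↦ d u / u` of the Lie algebra of derivations, for a unit `u`. -/
def dlog (u : A) [Invertible u] : LieDerivation R (Derivation R A A) A where
  toFun d := ⅟u * d u
  map_add' d e := by simp only [Derivation.add_apply, mul_add]
  map_smul' r d := by simp only [Derivation.smul_apply, mul_smul_comm, RingHom.id_apply]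
  leibniz' d e := by
    simp only [LinearMap.coe_mk, AddHom.coe_mk, Derivation.commutator_apply,
      Derivation.bracket_eq_fun, Derivation.leibniz, Derivation.leibniz_invOf, smul_eq_mul]
    ring

theorem dlog_apply (u : A) [Invertible u] (d : Derivation R A A) : dlog u d = ⅟u * d u := rfl

/-- A 1-cocycle with values in functions, made to act by multiplication. -/
def mulCocycle (c : LieDerivation R (Derivation R A A) A) :
    LieDerivation R (Derivation R A A) (Module.End R A) where
  toLinearMap := LinearMap.mul R A ∘ₗ c.toLinearMap
  leibniz' d e := by
    ext a
    simp

theorem mulCocycle_apply (c : LieDerivation R (Derivation R A A) A) (d : Derivation R A A)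
    (a : A) : mulCocycle c d a = c d * a := rfl

end DerivationCocycle

section AddMonoidAlgebra

variable {R G : Type*} [CommRing R]

theorem exists_finset_le_supported_of_fg {N : Submodule R (AddMonoidAlgebra R G)} (hN : N.FG) :
    ∃ s : Finset G, N ≤ AddMonoidAlgebra.supported R R (s : Set G) := by
  classical
  obtain ⟨S, rfl⟩ := hN
  refine ⟨S.biUnion fun f => f.coeff.support, span_le.2 fun f hf => ?_⟩
  exact Finset.coe_subset.2 (Finset.subset_biUnion_of_mem (fun f => f.coeff.support) hf)

theorem not_fg_of_forall_single_mem [Infinite G] {N : Submodule R (AddMonoidAlgebra R G)} {r : R}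
    (hr : r ≠ 0) (h : ∀ g, AddMonoidAlgebra.single g r ∈ N) : ¬ N.FG := by
  intro hN
  obtain ⟨s, hs⟩ := exists_finset_le_supported_of_fg hN
  obtain ⟨g, hg⟩ := Infinite.exists_notMem_finset s
  have coeff_eq_zero := AddMonoidAlgebra.mem_supported'.1 (hs (h g)) g hg
  exact hr (by simpa using coeff_eq_zero)

variable [AddCommMonoid G]

/-- The derivation of a monoid algebra that scales the monomial of degree `g` by `χ g`. -/
def gradingDerivation (χ : G →+ R) :
    Derivation R (AddMonoidAlgebra R G) (AddMonoidAlgebra R G) :=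
  .mk' ((AddMonoidAlgebra.basis G R).constr R fun g => .single g (χ g)) fun a b => by
    set D := (AddMonoidAlgebra.basis G R).constr R fun g => AddMonoidAlgebra.single g (χ g)
    have D_single (g : G) : D (.single g 1) = .single g (χ g) := by
      rw [← AddMonoidAlgebra.basis_apply, Module.Basis.constr_basis]
    let mul := LinearMap.mul R (AddMonoidAlgebra R G)
    suffices mul.compr₂ D = mul.compl₂ D + mul.flip.comp D by
      simpa [mul, mul_comm b] using LinearMap.congr_fun₂ this a b
    ext g h : 4
    simp [mul, D_single, add_comm]

theorem gradingDerivation_single (χ : G →+ R) (g : G) :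
    gradingDerivation χ (.single g 1) = .single g (χ g) := by
  change (AddMonoidAlgebra.basis G R).constr R _ _ = _
  rw [← AddMonoidAlgebra.basis_apply, Module.Basis.constr_basis]

end AddMonoidAlgebra

namespace wittAlgebra

variable {R : Type*} [CommRing R]

theorem derivation_ext_T {M : Type*} [AddCommGroup M] [Module R M] [Module R[T;T⁻¹] M]
    {d e : Derivation R R[T;T⁻¹] M} (h : d (T 1) = e (T 1)) : d = e := by
  have h_inv : d (T (-1)) = e (T (-1)) := by
    simp only [← invOf_T, Derivation.leibniz_invOf, h]
  ext f
  induction f using LaurentPolynomial.induction_on with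
  | h_C a => simp only [C_eq_algebraMap, Derivation.map_algebraMap]
  | h_add hf hg => simp only [map_add, hf, hg]
  | h_C_mul_T n a hf =>
    rw [T_add, ← mul_assoc, d.leibniz (C a * T n), e.leibniz (C a * T n), hf, h]
  | h_C_mul_T_Z n a hf =>
    rw [T_sub, ← mul_assoc, d.leibniz (C a * T (-n)), e.leibniz (C a * T (-n)), hf, h_inv]

local notation "W" => Derivation R R[T;T⁻¹] R[T;T⁻¹]

variable (R) in
/-- The Euler derivation `x d/dx`. -/
def euler : W := gradingDerivation (Int.castAddHom R)

theorem euler_T (n : ℤ) : euler R (T n) = (n : R) • T n := by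
  rw [euler, T, gradingDerivation_single, AddMonoidAlgebra.smul_single, Int.coe_castAddHom,
    smul_eq_mul, mul_one]

theorem dlog_smul_euler (f : R[T;T⁻¹]) : dlog (T 1) (f • euler R) = f := by
  rw [dlog_apply, Derivation.smul_apply, euler_T, Int.cast_one, one_smul, smul_eq_mul,
    mul_left_comm, invOf_mul_self, mul_one]

theorem eq_dlog_smul_euler (d : W) : d = dlog (T 1) d • euler R := by
  apply derivation_ext_T
  rw [dlog_apply, Derivation.smul_apply, euler_T, Int.cast_one, one_smul, smul_eq_mul,
    mul_right_comm, invOf_mul_self, one_mul]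

theorem apply_eq_dlog_mul_euler (d : W) (f : R[T;T⁻¹]) : d f = dlog (T 1) d * euler R f :=
  DFunLike.congr_fun (eq_dlog_smul_euler d) f

variable (R) in
/-- The divergence with respect to the volume form `dx/x`, as a 1-cocycle: it sends `f · x d/dx` to
`x df/dx`. -/
def divergence : LieDerivation R W R[T;T⁻¹] where
  toLinearMap := (euler R).toLinearMap ∘ₗ (dlog (T 1)).toLinearMap
  leibniz' d e := by
    change euler R (dlog (T 1) ⁅d, e⁆) = d (euler R (dlog (T 1) e)) - e (euler R (dlog (T 1) d))
    simp only [LieDerivation.apply_lie_eq_sub, Derivation.bracket_eq_fun, map_sub,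
      apply_eq_dlog_mul_euler d, apply_eq_dlog_mul_euler e, Derivation.leibniz, smul_eq_mul]
    ring

theorem divergence_smul_euler (f : R[T;T⁻¹]) : divergence R (f • euler R) = euler R f :=
  congrArg (euler R) (dlog_smul_euler f)

variable (R) in
/-- The action of the enveloping algebra on the densities `f · (dx/x) ^ ε` with `ε ^ 2 = 0`. -/
def densityAction : UniversalEnvelopingAlgebra R W →ₐ[R] (Module.End R R[T;T⁻¹])[ε] :=
  deformedAction (mulCocycle (divergence R))

variable (R) in
/-- The basis element `e_n = x ^ (n + 1) d/dx`, inside the enveloping algebra. -/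
def basisElement (n : ℤ) : UniversalEnvelopingAlgebra R W :=
  UniversalEnvelopingAlgebra.ι R ((T n : R[T;T⁻¹]) • euler R)

theorem fst_densityAction_basisElement (n : ℤ) (f : R[T;T⁻¹]) :
    (densityAction R (basisElement R n)).fst f = T n * euler R f := by
  rw [basisElement, densityAction, fst_deformedAction_ι, LieModule.toEnd_apply_apply,
    Derivation.bracket_eq_fun, Derivation.smul_apply, smul_eq_mul]

theorem snd_densityAction_basisElement (n : ℤ) (f : R[T;T⁻¹]) :
    (densityAction R (basisElement R n)).snd f = (n : R) • (T n * f) := by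
  rw [basisElement, densityAction, snd_deformedAction_ι, mulCocycle_apply, divergence_smul_euler,
    euler_T, smul_mul_assoc]

theorem fst_densityAction_basisElement_mul (i j : ℤ) (f : R[T;T⁻¹]) :
    (densityAction R (basisElement R i * basisElement R j)).fst f =
      T (i + j) * (euler R (euler R f) + (j : R) • euler R f) := by
  simp only [map_mul, TrivSqZeroExt.fst_mul, Module.End.mul_apply, fst_densityAction_basisElement,
    Derivation.leibniz, euler_T, T_add, smul_eq_mul, Algebra.smul_def]
  ring

theorem snd_densityAction_basisElement_mul_apply_one (i j : ℤ) :
    (densityAction R (basisElement R i * basisElement R j)).snd 1 = (j : R) ^ 2 • T (i + j) := by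
  simp only [map_mul, TrivSqZeroExt.snd_mul, LinearMap.add_apply, smul_eq_mul, op_smul_eq_mul,
    Module.End.mul_apply, snd_densityAction_basisElement, fst_densityAction_basisElement,
    Derivation.map_one_eq_zero, mul_zero, smul_zero, add_zero, mul_one, map_smul, euler_T, T_add,
    mul_smul_comm, smul_smul, sq]

variable (R) in
/-- The second difference in `j` of the products `e_{n-j} e_j`. It retains only the part of their
action on densities that is quadratic in `j`. -/
def secondDifference (n : ℤ) : UniversalEnvelopingAlgebra R W :=
  basisElement R (n - 1) * basisElement R 1 - (2 : R) • (basisElement R n * basisElement R 0) +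
    basisElement R (n + 1) * basisElement R (-1)

theorem fst_densityAction_secondDifference (n : ℤ) :
    (densityAction R (secondDifference R n)).fst = 0 := by
  refine LinearMap.ext fun f => ?_
  simp only [secondDifference, map_add, map_sub, TrivSqZeroExt.fst_add,
    TrivSqZeroExt.fst_sub, LinearMap.add_apply, LinearMap.sub_apply,
    fst_densityAction_basisElement_mul, sub_add_cancel, add_zero, add_neg_cancel_right,
    Int.cast_one, Int.cast_zero, Int.cast_neg, one_smul, zero_smul, neg_smul, two_smul,
    LinearMap.zero_apply]
  ring

theorem snd_densityAction_secondDifference_apply_one (n : ℤ) :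
    (densityAction R (secondDifference R n)).snd 1 = (2 : R) • T n := by
  simp only [secondDifference, map_add, map_sub, map_smul, TrivSqZeroExt.snd_add,
    TrivSqZeroExt.snd_sub, TrivSqZeroExt.snd_smul, LinearMap.add_apply, LinearMap.sub_apply,
    LinearMap.smul_apply, snd_densityAction_basisElement_mul_apply_one, sub_add_cancel, add_zero,
    add_neg_cancel_right, Int.cast_one, Int.cast_zero, Int.cast_neg]
  module

theorem single_two_mem_firstOrderValues (n : ℤ) :
    AddMonoidAlgebra.single n 2 ∈ firstOrderValues (densityAction R) 1 :=
  ⟨secondDifference R n, fst_densityAction_secondDifference n, by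
    rw [snd_densityAction_secondDifference_apply_one, T, AddMonoidAlgebra.smul_single, smul_eq_mul,
      mul_one]⟩

end wittAlgebra

theorem witt_enveloping_not_noetherian_general (R : Type*) [CommRing R] (two_ne : (2 : R) ≠ 0) :
    ¬ IsNoetherianRing
        (UniversalEnvelopingAlgebra R (Derivation R R[T;T⁻¹] R[T;T⁻¹])) ∧
      ¬ IsNoetherianRing
        (UniversalEnvelopingAlgebra R (Derivation R R[T;T⁻¹] R[T;T⁻¹]))ᵐᵒᵖ := by
  have not_right : ¬ IsNoetherianRing
      (UniversalEnvelopingAlgebra R (Derivation R R[T;T⁻¹] R[T;T⁻¹]))ᵐᵒᵖ := fun _ =>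
    not_fg_of_forall_single_mem two_ne wittAlgebra.single_two_mem_firstOrderValues <|
      fg_firstOrderValues_deformedAction _ Derivation.map_one_eq_zero
  exact ⟨fun _ => not_right (isNoetherianRing_op_envelopingAlgebra R _), not_right⟩

theorem witt_enveloping_not_noetherian (k : Type*) [Field k] [CharZero k] :
    ¬ IsNoetherianRing (UniversalEnvelopingAlgebra k (wittAlgebra k)) ∧
      ¬ IsNoetherianRing (UniversalEnvelopingAlgebra k (wittAlgebra k))ᵐᵒᵖ :=
  witt_enveloping_not_noetherian_general k two_ne_zero

end
end

section
/- There is a k-algebra isomorphism from the quotient of the free associative algebra k⟨E₁, E₂⟩ by the two-sided ideal generated by the elements R₅ = [E₁,[E₁,[E₁,E₂]]] + 6[E₂,[E₂,E₁]] and R₇ = [E₁,[E₁,[E₁,[E₁,[E₁,E₂]]]]] + 40[E₂,[E₂,[E₂,E₁]]] onto U(W₊), sending E₁ to e₁ and E₂ to e₂ (here [a,b] = ab − ba denotes the ring commutator). -/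
set_option maxHeartbeats 1000000

/-!
Statement 2: There is a k-algebra isomorphism from the quotient of the free associative
algebra k⟨E₁,E₂⟩ by the two-sided ideal generated by
R₅ = [E₁,[E₁,[E₁,E₂]]] + 6[E₂,[E₂,E₁]] and
R₇ = [E₁,[E₁,[E₁,[E₁,[E₁,E₂]]]]] + 40[E₂,[E₂,[E₂,E₁]]]
onto U(W₊), sending E₁ to e₁ and E₂ to e₂.

The quotient by the two-sided ideal generated by R₅ and R₇ is realized as the `RingQuot`
of the relation identifying R₅ and R₇ with 0.
-/

noncomputable section

open Polynomial

/-- `e n` as an element of `W₊` (for `1 ≤ n`). -/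
def wittElt (k : Type*) [Field k] (n : ℕ) (hn : 1 ≤ n) : positiveWitt k :=
  ⟨wittGen k n, LieSubalgebra.subset_lieSpan ⟨n, hn, rfl⟩⟩

/-- The ring commutator [a, b] = ab - ba. -/
def cm {A : Type*} [Ring A] (a b : A) : A := a * b - b * a

/-- The generator E₁ of the free algebra on two generators. -/
def E₁ (k : Type*) [Field k] : FreeAlgebra k (Fin 2) := FreeAlgebra.ι k 0

/-- The generator E₂ of the free algebra on two generators. -/
def E₂ (k : Type*) [Field k] : FreeAlgebra k (Fin 2) := FreeAlgebra.ι k 1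

/-- The degree 5 relation R₅. -/
def R₅ (k : Type*) [Field k] : FreeAlgebra k (Fin 2) :=
  cm (E₁ k) (cm (E₁ k) (cm (E₁ k) (E₂ k))) + 6 * cm (E₂ k) (cm (E₂ k) (E₁ k))

/-- The degree 7 relation R₇. -/
def R₇ (k : Type*) [Field k] : FreeAlgebra k (Fin 2) :=
  cm (E₁ k) (cm (E₁ k) (cm (E₁ k) (cm (E₁ k) (cm (E₁ k) (E₂ k))))) +
    40 * cm (E₂ k) (cm (E₂ k) (cm (E₂ k) (E₁ k)))

/-- The relation setting R₅ and R₇ to zero; `RingQuot` of this relation is the quotient of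
the free algebra by the two-sided ideal generated by R₅ and R₇. -/
def wittRel (k : Type*) [Field k] : FreeAlgebra k (Fin 2) → FreeAlgebra k (Fin 2) → Prop :=
  fun a b => (a = R₅ k ∧ b = 0) ∨ (a = R₇ k ∧ b = 0)

/-!
`U(W₊)` and the quotient algebra have the same universal property: homomorphisms out of either one
are pairs `x, y` in the target satisfying the two relations. For `U(W₊)` this says that such a
pair extends uniquely to a sequence obeying the relations of `W₊`. Bracketing with `x` forces the
sequence, and the relations of `W₊` hold by induction on the degree: the Jacobi identity with `e₁`
shows that, in each degree, the failures of the relations for the `⁅e_i, e_j⁆` are binomial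
multiples of the failure `δ` for `⁅e₂, e_j⁆`. In degrees above 7, the Jacobi identity with `e₂`
makes a positive integer multiple of `δ` vanish; degrees 5 and 7 are the two given relations, and
degrees 4 and 6 follow from skew-symmetry.
-/

section WittSequences

variable {L : Type*} [LieRing L]

/-- The relations of the positive Witt algebra for a sequence `a` in a Lie ring. The index is
shifted: `a n` plays the role of `e (n + 1)`, so that no index has to be kept positive. -/
def IsWittSeq (a : ℕ → L) : Prop :=
  ∀ i j, ⁅a i, a j⁆ = ((j : ℤ) - i) • a (i + j + 1)

/-- The two relations of degrees 5 and 7 presenting the positive Witt algebra, for a pair of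
elements of a Lie ring. -/
structure IsWittPair (x y : L) : Prop where
  degree_five : ⁅x, ⁅x, ⁅x, y⁆⁆⁆ + 6 • ⁅y, ⁅y, x⁆⁆ = 0
  degree_seven : ⁅x, ⁅x, ⁅x, ⁅x, ⁅x, y⁆⁆⁆⁆⁆ + 40 • ⁅y, ⁅y, ⁅y, x⁆⁆⁆ = 0

theorem IsWittSeq.isWittPair {a : ℕ → L} (ha : IsWittSeq a) : IsWittPair (a 0) (a 1) where
  degree_five := by
    simp only [ha _ _, lie_zsmul, Nat.reduceAdd]
    module
  degree_seven := by
    simp only [ha _ _, lie_zsmul, Nat.reduceAdd]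
    module

theorem IsWittSeq.map {R L' : Type*} [CommRing R] [LieAlgebra R L] [LieRing L'] [LieAlgebra R L']
    {a : ℕ → L} (ha : IsWittSeq a) (f : L →ₗ⁅R⁆ L') : IsWittSeq (f ∘ a) := fun i j => by
  simp only [Function.comp_apply, ← LieHom.map_lie, ha i j, map_zsmul]

theorem IsWittSeq.lie_apply_zero {a : ℕ → L} (ha : IsWittSeq a) (n : ℕ) :
    ⁅a 0, a n⁆ = n • a (n + 1) := by
  simp [ha 0 n]

theorem IsWittSeq.ext [IsAddTorsionFree L] {a b : ℕ → L} (ha : IsWittSeq a) (hb : IsWittSeq b)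
    (h0 : a 0 = b 0) (h1 : a 1 = b 1) : a = b := by
  funext n
  induction n using Nat.twoStepInduction with
  | zero => exact h0
  | one => exact h1
  | more n _ ih =>
    refine nsmul_right_injective n.succ_ne_zero ?_
    change (n + 1) • a (n + 1 + 1) = (n + 1) • b (n + 1 + 1)
    rw [← ha.lie_apply_zero, ← hb.lie_apply_zero, h0, ih]

/-- The failure of the relation for `⁅a i, a j⁆` in `IsWittSeq a`. -/
def wittDefect (a : ℕ → L) (i j : ℕ) : L :=
  ⁅a i, a j⁆ - ((j : ℤ) - i) • a (i + j + 1)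

variable {a : ℕ → L}

theorem lie_eq_wittDefect_add (a : ℕ → L) (i j : ℕ) :
    ⁅a i, a j⁆ = wittDefect a i j + ((j : ℤ) - i) • a (i + j + 1) :=
  (sub_add_cancel _ _).symm

theorem wittDefect_eq_zero_iff {i j : ℕ} :
    wittDefect a i j = 0 ↔ ⁅a i, a j⁆ = ((j : ℤ) - i) • a (i + j + 1) :=
  sub_eq_zero

theorem wittDefect_self (a : ℕ → L) (i : ℕ) : wittDefect a i i = 0 := by
  simp [wittDefect]

theorem wittDefect_swap (a : ℕ → L) (i j : ℕ) : wittDefect a j i = -wittDefect a i j := by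
  rw [wittDefect, wittDefect, ← lie_skew, add_comm j i]
  module

theorem wittDefect_jacobi {l i j : ℕ} (hij : wittDefect a i j = 0) (hli : wittDefect a l i = 0)
    (hlj : wittDefect a l j = 0) :
    ((j : ℤ) - i) • wittDefect a l (i + j + 1) =
      ((i : ℤ) - l) • wittDefect a (l + i + 1) j + ((j : ℤ) - l) • wittDefect a i (l + j + 1) := by
  have jacobi := leibniz_lie (a l) (a i) (a j)
  rw [wittDefect_eq_zero_iff.mp hij, wittDefect_eq_zero_iff.mp hli, wittDefect_eq_zero_iff.mp hlj,
    lie_zsmul, zsmul_lie, lie_zsmul, lie_eq_wittDefect_add a l, lie_eq_wittDefect_add a _ j,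
    lie_eq_wittDefect_add a i, show l + i + 1 + j + 1 = l + (i + j + 1) + 1 by ring,
    show i + (l + j + 1) + 1 = l + (i + j + 1) + 1 by ring] at jacobi
  push_cast at jacobi
  linear_combination (norm := module) jacobi

theorem wittDefect_succ_left (h0 : ∀ n, wittDefect a 0 n = 0) {i j : ℕ}
    (hij : wittDefect a i j = 0) :
    i • wittDefect a (i + 1) j = -(j • wittDefect a i (j + 1)) := by
  have jacobi := wittDefect_jacobi hij (h0 i) (h0 j)
  simp only [h0, smul_zero, zero_add] at jacobi
  linear_combination (norm := module) -jacobi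

variable [IsAddTorsionFree L]

theorem wittDefect_succ_succ (h0 : ∀ n, wittDefect a 0 n = 0) {n : ℕ}
    (hn : ∀ i j, i + j = n + 1 → wittDefect a i j = 0) {i j : ℕ} (hij : i + j = n) :
    wittDefect a (i + 1) (j + 1) = ((-1) ^ i * n.choose i : ℤ) • wittDefect a 1 (n + 1) := by
  induction i generalizing j with
  | zero =>
    obtain rfl : j = n := by omega
    simp
  | succ i ih =>
    have hchoose : (n.choose (i + 1) : ℤ) * (i + 1) = n.choose i * (j + 1) := by
      have h := n.choose_succ_right_eq i
      rw [show n - i = j + 1 by omega] at h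
      exact_mod_cast h
    refine nsmul_right_injective i.succ_ne_zero ?_
    calc (i + 1) • wittDefect a (i + 1 + 1) (j + 1)
        = -((j + 1) • wittDefect a (i + 1) (j + 1 + 1)) :=
          wittDefect_succ_left h0 (hn _ _ (by omega))
      _ = (-(-1) ^ i * (n.choose i * (j + 1)) : ℤ) • wittDefect a 1 (n + 1) := by
          rw [ih (by omega)]
          module
      _ = (i + 1) • ((-1) ^ (i + 1) * n.choose (i + 1) : ℤ) • wittDefect a 1 (n + 1) := by
          rw [← hchoose]
          module

theorem wittDefect_one_three (h0 : ∀ n, wittDefect a 0 n = 0)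
    (hlow : ∀ i j, i + j = 3 → wittDefect a i j = 0) : wittDefect a 1 3 = 0 := by
  have h := wittDefect_succ_succ h0 hlow (show 1 + 1 = 2 from rfl)
  rw [wittDefect_self] at h
  simpa using h.symm

theorem wittDefect_one_add_five (h0 : ∀ n, wittDefect a 0 n = 0) {n : ℕ}
    (hlow : ∀ i j, i + j < n + 6 → wittDefect a i j = 0) : wittDefect a 1 (n + 5) = 0 := by
  have ladder : ∀ {i j}, i + j = n + 4 → wittDefect a (i + 1) (j + 1) =
      ((-1) ^ i * (n + 4).choose i : ℤ) • wittDefect a 1 (n + 5) :=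
    wittDefect_succ_succ h0 fun i j hij => hlow i j (by omega)
  have jacobi := wittDefect_jacobi (hlow 2 (n + 2) (by omega)) (hlow 1 2 (by omega))
    (hlow 1 (n + 2) (by omega))
  rw [show 2 + (n + 2) + 1 = n + 5 by ring, show 1 + (n + 2) + 1 = n + 3 + 1 by ring,
    ladder (show 3 + (n + 1) = n + 4 by ring), ladder (show 1 + (n + 3) = n + 4 by ring)] at jacobi
  -- With `δ = wittDefect a 1 (n + 5)`, the identity now reads
  -- `n • δ = -(n + 4).choose 3 • δ - (n + 1) • (n + 4) • δ`.
  have hmul : (n + (n + 4).choose 3 + (n + 1) * (n + 4)) • wittDefect a 1 (n + 5) = 0 := by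
    rw [Nat.choose_one_right] at jacobi
    push_cast at jacobi
    linear_combination (norm := module) jacobi
  exact (smul_eq_zero.mp hmul).resolve_left (by positivity)

theorem isWittSeq_of_generating_relations (h0 : ∀ n, ⁅a 0, a n⁆ = n • a (n + 1))
    (h5 : ⁅a 1, a 2⁆ = a 4) (h7 : ⁅a 1, a 4⁆ = 3 • a 6) : IsWittSeq a := by
  have hzero : ∀ n, wittDefect a 0 n = 0 := fun n => by simp [wittDefect, h0]
  suffices ∀ n i j, i + j = n → wittDefect a i j = 0 from
    fun i j => wittDefect_eq_zero_iff.mp (this _ i j rfl)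
  intro n
  induction n using Nat.strong_induction_on with
  | _ n ih =>
    rintro (_ | i) j hij
    · exact hzero j
    rcases j with _ | j
    · rw [wittDefect_swap, hzero, neg_zero]
    have hone : wittDefect a 1 (i + j + 1) = 0 := by
      match h : i + j with
      | 0 => exact wittDefect_self a 1
      | 1 => simp [wittDefect, h5]
      | 2 => exact wittDefect_one_three hzero fun i' j' h' => ih 3 (by omega) i' j' h'
      | 3 =>
        refine wittDefect_eq_zero_iff.mpr (h7.trans ?_)
        module
      | m + 4 => exact wittDefect_one_add_five hzero fun i' j' h' => ih _ (by omega) i' j' rfl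
    have hlow : ∀ i' j', i' + j' = i + j + 1 → wittDefect a i' j' = 0 := ih _ (by omega)
    rw [wittDefect_succ_succ hzero hlow rfl, hone, smul_zero]

end WittSequences

section WittSeq

variable (k : Type*) {L : Type*} [Field k] [LieRing L] [LieAlgebra k L]

/-- The only candidate for a sequence satisfying `IsWittSeq` with initial terms `x` and `y`: the
relations for `⁅x, a n⁆` determine it. -/
def wittSeq (x y : L) : ℕ → L
  | 0 => x
  | 1 => y
  | n + 2 => ((n : k) + 1)⁻¹ • ⁅x, wittSeq x y (n + 1)⁆

variable [CharZero k] {x y : L}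

theorem lie_wittSeq (x y : L) (n : ℕ) : ⁅x, wittSeq k x y n⁆ = n • wittSeq k x y (n + 1) := by
  match n with
  | 0 => simp [wittSeq]
  | n + 1 =>
    have hn : (n : k) + 1 ≠ 0 := n.cast_add_one_ne_zero
    rw [wittSeq, ← Nat.cast_smul_eq_nsmul k, Nat.cast_add_one, smul_inv_smul₀ hn]

theorem lie_wittSeq_one_two (h : IsWittPair x y) :
    ⁅wittSeq k x y 1, wittSeq k x y 2⁆ = wittSeq k x y 4 := by
  have h6 : ⁅x, ⁅x, ⁅x, y⁆⁆⁆ = (6 : k) • ⁅y, ⁅x, y⁆⁆ := by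
    have h5 := h.degree_five
    rw [← lie_skew y x, lie_neg] at h5
    linear_combination (norm := module) h5
  simp only [wittSeq, lie_smul, smul_smul, h6]
  norm_num

theorem lie_wittSeq_one_four (h : IsWittPair x y) :
    ⁅wittSeq k x y 1, wittSeq k x y 4⁆ = 3 • wittSeq k x y 6 := by
  have h40 : ⁅x, ⁅x, ⁅x, ⁅x, ⁅x, y⁆⁆⁆⁆⁆ = (40 : k) • ⁅y, ⁅y, ⁅x, y⁆⁆⁆ := by
    have h7 := h.degree_seven
    rw [← lie_skew y x, lie_neg, lie_neg] at h7
    linear_combination (norm := module) h7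
  rw [← lie_wittSeq_one_two k h, ← Nat.cast_smul_eq_nsmul k]
  simp only [wittSeq, lie_smul, smul_smul, h40]
  norm_num

theorem IsWittPair.isWittSeq_wittSeq (h : IsWittPair x y) : IsWittSeq (wittSeq k x y) :=
  have := IsAddTorsionFree.of_isTorsionFree k L
  isWittSeq_of_generating_relations (lie_wittSeq k x y) (lie_wittSeq_one_two k h)
    (lie_wittSeq_one_four k h)

end WittSeq

section BracketsOfSpanningSets

variable {R L L' ι : Type*} [CommRing R] [LieRing L] [LieAlgebra R L] [LieRing L'] [LieAlgebra R L']

theorem lieSpan_toSubmodule_eq_span {s : Set L}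
    (h : ∀ x ∈ s, ∀ y ∈ s, ⁅x, y⁆ ∈ Submodule.span R s) :
    (LieSubalgebra.lieSpan R L s).toSubmodule = Submodule.span R s := by
  have lie_mem {x y : L} (hx : x ∈ Submodule.span R s) (hy : y ∈ Submodule.span R s) :
      ⁅x, y⁆ ∈ Submodule.span R s := by
    have hxy := Submodule.apply_mem_map₂ (LieModule.toEnd R L L : L →ₗ[R] Module.End R L) hx hy
    rw [Submodule.map₂_span_span] at hxy
    exact Submodule.span_le.mpr (Set.image2_subset_iff.mpr h) hxy
  let S : LieSubalgebra R L := { Submodule.span R s with lie_mem' := lie_mem }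
  exact le_antisymm ((LieSubalgebra.lieSpan_le (K := S)).mpr Submodule.subset_span)
    LieSubalgebra.submodule_span_le_lieSpan

theorem map_lie_of_basis (b : Module.Basis ι R L) (f : L →ₗ[R] L')
    (h : ∀ i j, f ⁅b i, b j⁆ = ⁅f (b i), f (b j)⁆) (x y : L) : f ⁅x, y⁆ = ⁅f x, f y⁆ := by
  have hcomp : (LieModule.toEnd R L L : L →ₗ[R] Module.End R L).compr₂ f =
      (LieModule.toEnd R L' L' : L' →ₗ[R] Module.End R L').compl₁₂ f f :=
    LinearMap.ext_basis b b h
  exact LinearMap.congr_fun₂ hcomp x y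

end BracketsOfSpanningSets

section PositiveWitt

variable (k : Type*) [Field k]

theorem wittGen_eq_mkDerivation (n : ℕ) :
    wittGen k n = Polynomial.mkDerivation k ((X : k[X]) ^ (n + 1)) :=
  Polynomial.derivation_ext (by simp [wittGen])

theorem wittGen_apply_X (n : ℕ) : wittGen k n X = X ^ (n + 1) := by
  rw [wittGen_eq_mkDerivation, Polynomial.mkDerivation_X]

theorem lie_wittGen (i j : ℕ) :
    ⁅wittGen k i, wittGen k j⁆ = ((j : ℤ) - i) • wittGen k (i + j) := by
  refine Polynomial.derivation_ext ?_
  simp only [Derivation.commutator_apply, Derivation.smul_apply, wittGen_apply_X,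
    Derivation.leibniz_pow, add_tsub_cancel_right, smul_eq_mul, nsmul_eq_mul, zsmul_eq_mul]
  push_cast
  ring

theorem isWittSeq_wittGen_succ : IsWittSeq fun n => wittGen k (n + 1) := fun i j => by
  simp only [lie_wittGen, Nat.cast_add_one, add_sub_add_right_eq_sub, Nat.succ_add_eq_add_succ]
  rfl

theorem linearIndependent_wittGen : LinearIndependent k (wittGen k) := by
  have hX : LinearIndependent k fun n : ℕ => (X : k[X]) ^ (n + 1) := by
    have h := (Polynomial.basisMonomials k).linearIndependent.comp _ Nat.succ_injective
    simpa [Function.comp_def, Polynomial.X_pow_eq_monomial] using h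
  rw [funext (wittGen_eq_mkDerivation k)]
  exact hX.map' _ (Polynomial.mkDerivationEquiv k).ker

theorem positiveWitt_toSubmodule :
    (positiveWitt k).toSubmodule = Submodule.span k (Set.range fun n => wittGen k (n + 1)) := by
  have hgen : {d | ∃ n : ℕ, 1 ≤ n ∧ d = wittGen k n} = Set.range fun n => wittGen k (n + 1) := by
    ext d
    constructor
    · rintro ⟨n, hn, rfl⟩
      exact ⟨n - 1, by simp only [Nat.sub_add_cancel hn]⟩
    · rintro ⟨n, rfl⟩
      exact ⟨n + 1, n.succ_pos, rfl⟩
  rw [positiveWitt, hgen]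
  refine lieSpan_toSubmodule_eq_span ?_
  rintro _ ⟨i, rfl⟩ _ ⟨j, rfl⟩
  rw [isWittSeq_wittGen_succ k i j]
  exact zsmul_mem (Submodule.subset_span (Set.mem_range_self (i + j + 1))) _

/-- The basis `e 1, e 2, …` of `W₊`, with `e (n + 1)` at index `n`. -/
def positiveWittBasis : Module.Basis ℕ k (positiveWitt k) :=
  (Module.Basis.span ((linearIndependent_wittGen k).comp _ Nat.succ_injective)).map
    (LinearEquiv.ofEq _ _ (positiveWitt_toSubmodule k).symm)

theorem positiveWittBasis_apply (n : ℕ) :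
    positiveWittBasis k n = wittElt k (n + 1) n.succ_pos := by
  have hli := (linearIndependent_wittGen k).comp _ Nat.succ_injective
  exact Subtype.ext (Module.Basis.coe_span_apply hli n)

theorem isWittSeq_positiveWittBasis : IsWittSeq (positiveWittBasis k) := fun i j => by
  simp only [positiveWittBasis_apply]
  refine Subtype.ext ((isWittSeq_wittGen_succ k i j).trans ?_)
  rfl

variable {k} {L : Type*} [LieRing L] [LieAlgebra k L]

/-- The Lie algebra homomorphism `W₊ → L` determined by the images of the basis vectors. -/
def IsWittSeq.lift {a : ℕ → L} (ha : IsWittSeq a) : positiveWitt k →ₗ⁅k⁆ L where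
  toLinearMap := (positiveWittBasis k).constr k a
  map_lie' {x y} := by
    refine map_lie_of_basis (positiveWittBasis k) _ (fun i j => ?_) x y
    simp only [isWittSeq_positiveWittBasis k i j, map_zsmul, Module.Basis.constr_basis, ha i j]

theorem IsWittSeq.lift_positiveWittBasis {a : ℕ → L} (ha : IsWittSeq a) (n : ℕ) :
    ha.lift (positiveWittBasis k n) = a n :=
  (positiveWittBasis k).constr_basis k a n

variable [CharZero k]

theorem positiveWitt_hom_ext {f g : positiveWitt k →ₗ⁅k⁆ L}
    (h1 : f (wittElt k 1 le_rfl) = g (wittElt k 1 le_rfl))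
    (h2 : f (wittElt k 2 one_le_two) = g (wittElt k 2 one_le_two)) : f = g := by
  have := IsAddTorsionFree.of_isTorsionFree k L
  have hbasis := isWittSeq_positiveWittBasis k
  have hseq : f ∘ positiveWittBasis k = g ∘ positiveWittBasis k := by
    refine (hbasis.map f).ext (hbasis.map g) ?_ ?_
    · simpa only [Function.comp_apply, positiveWittBasis_apply] using h1
    · simpa only [Function.comp_apply, positiveWittBasis_apply] using h2
  have hlin : (f : positiveWitt k →ₗ[k] L) = g := (positiveWittBasis k).ext (congrFun hseq)
  exact LieHom.ext (LinearMap.congr_fun hlin)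

/-- The Lie algebra homomorphism `W₊ → L` sending `e 1` to `x` and `e 2` to `y`. -/
def IsWittPair.lift {x y : L} (h : IsWittPair x y) : positiveWitt k →ₗ⁅k⁆ L :=
  (h.isWittSeq_wittSeq k).lift

theorem IsWittPair.lift_wittElt_one {x y : L} (h : IsWittPair x y) :
    h.lift (wittElt k 1 le_rfl) = x := by
  rw [← positiveWittBasis_apply k 0]
  exact (h.isWittSeq_wittSeq k).lift_positiveWittBasis 0

theorem IsWittPair.lift_wittElt_two {x y : L} (h : IsWittPair x y) :
    h.lift (wittElt k 2 one_le_two) = y := by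
  rw [← positiveWittBasis_apply k 1]
  exact (h.isWittSeq_wittSeq k).lift_positiveWittBasis 1

end PositiveWitt

section Presentation

attribute [local instance] LieRing.ofAssociativeRing

variable {k A : Type*} [Field k] [Ring A] [Algebra k A]

theorem isWittPair_map_iff (f : FreeAlgebra k (Fin 2) →ₐ[k] A) :
    IsWittPair (f (E₁ k)) (f (E₂ k)) ↔ f (R₅ k) = 0 ∧ f (R₇ k) = 0 := by
  have h5 : f (R₅ k) = ⁅f (E₁ k), ⁅f (E₁ k), ⁅f (E₁ k), f (E₂ k)⁆⁆⁆ +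
      6 • ⁅f (E₂ k), ⁅f (E₂ k), f (E₁ k)⁆⁆ := by
    simp only [R₅, cm, map_add, map_mul, map_sub, map_ofNat, Ring.lie_def, nsmul_eq_mul,
      Nat.cast_ofNat]
  have h7 : f (R₇ k) = ⁅f (E₁ k), ⁅f (E₁ k), ⁅f (E₁ k), ⁅f (E₁ k), ⁅f (E₁ k), f (E₂ k)⁆⁆⁆⁆⁆ +
      40 • ⁅f (E₂ k), ⁅f (E₂ k), ⁅f (E₂ k), f (E₁ k)⁆⁆⁆ := by
    simp only [R₇, cm, map_add, map_mul, map_sub, map_ofNat, Ring.lie_def, nsmul_eq_mul,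
      Nat.cast_ofNat]
  rw [h5, h7]
  exact ⟨fun h => ⟨h.degree_five, h.degree_seven⟩, fun h => ⟨h.1, h.2⟩⟩

variable (k) in
theorem isWittPair_mkAlgHom :
    IsWittPair (RingQuot.mkAlgHom k (wittRel k) (E₁ k))
      (RingQuot.mkAlgHom k (wittRel k) (E₂ k)) := by
  rw [isWittPair_map_iff, ← map_zero (RingQuot.mkAlgHom k (wittRel k))]
  exact ⟨RingQuot.mkAlgHom_rel k (Or.inl ⟨rfl, rfl⟩), RingQuot.mkAlgHom_rel k (Or.inr ⟨rfl, rfl⟩)⟩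

variable (k) in
theorem isWittPair_ι :
    IsWittPair (UniversalEnvelopingAlgebra.ι k (wittElt k 1 le_rfl))
      (UniversalEnvelopingAlgebra.ι k (wittElt k 2 one_le_two)) := by
  have h := ((isWittSeq_positiveWittBasis k).map (UniversalEnvelopingAlgebra.ι k)).isWittPair
  simpa only [Function.comp_apply, positiveWittBasis_apply] using h

variable (k) in
theorem IsWittPair.exists_algHom {x y : A} (h : IsWittPair x y) :
    ∃ φ : RingQuot (wittRel k) →ₐ[k] A, φ (RingQuot.mkAlgHom k (wittRel k) (E₁ k)) = x ∧
      φ (RingQuot.mkAlgHom k (wittRel k) (E₂ k)) = y := by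
  let f : FreeAlgebra k (Fin 2) →ₐ[k] A := FreeAlgebra.lift k ![x, y]
  have f1 : f (E₁ k) = x := by simp [f, E₁]
  have f2 : f (E₂ k) = y := by simp [f, E₂]
  obtain ⟨f5, f7⟩ : f (R₅ k) = 0 ∧ f (R₇ k) = 0 := by rwa [← isWittPair_map_iff, f1, f2]
  have hrel : ∀ ⦃u v⦄, wittRel k u v → f u = f v := by
    rintro u v (⟨rfl, rfl⟩ | ⟨rfl, rfl⟩)
    · rw [f5, map_zero]
    · rw [f7, map_zero]
  exact ⟨RingQuot.liftAlgHom k ⟨f, hrel⟩,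
    (RingQuot.liftAlgHom_mkAlgHom_apply k f hrel _).trans f1,
    (RingQuot.liftAlgHom_mkAlgHom_apply k f hrel _).trans f2⟩

theorem ringQuot_wittRel_hom_ext {f g : RingQuot (wittRel k) →ₐ[k] A}
    (h1 : f (RingQuot.mkAlgHom k (wittRel k) (E₁ k)) = g (RingQuot.mkAlgHom k (wittRel k) (E₁ k)))
    (h2 : f (RingQuot.mkAlgHom k (wittRel k) (E₂ k)) = g (RingQuot.mkAlgHom k (wittRel k) (E₂ k))) :
    f = g := by
  refine RingQuot.ringQuot_ext' k _ _ (FreeAlgebra.hom_ext (funext fun i => ?_))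
  fin_cases i
  · exact h1
  · exact h2

variable [CharZero k]

variable (k) in
theorem IsWittPair.exists_enveloping_algHom {x y : A} (h : IsWittPair x y) :
    ∃ θ : UniversalEnvelopingAlgebra k (positiveWitt k) →ₐ[k] A,
      θ (UniversalEnvelopingAlgebra.ι k (wittElt k 1 le_rfl)) = x ∧
        θ (UniversalEnvelopingAlgebra.ι k (wittElt k 2 one_le_two)) = y :=
  ⟨UniversalEnvelopingAlgebra.lift k h.lift,
    (UniversalEnvelopingAlgebra.lift_ι_apply k _ _).trans h.lift_wittElt_one,
    (UniversalEnvelopingAlgebra.lift_ι_apply k _ _).trans h.lift_wittElt_two⟩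

theorem enveloping_positiveWitt_hom_ext
    {f g : UniversalEnvelopingAlgebra k (positiveWitt k) →ₐ[k] A}
    (h1 : f (UniversalEnvelopingAlgebra.ι k (wittElt k 1 le_rfl)) =
      g (UniversalEnvelopingAlgebra.ι k (wittElt k 1 le_rfl)))
    (h2 : f (UniversalEnvelopingAlgebra.ι k (wittElt k 2 one_le_two)) =
      g (UniversalEnvelopingAlgebra.ι k (wittElt k 2 one_le_two))) : f = g :=
  UniversalEnvelopingAlgebra.hom_ext k (positiveWitt_hom_ext h1 h2)

end Presentation

theorem presentation_of_enveloping_positiveWitt (k : Type*) [Field k] [CharZero k] :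
    ∃ ψ : RingQuot (wittRel k) ≃ₐ[k] UniversalEnvelopingAlgebra k (positiveWitt k),
      ψ (RingQuot.mkAlgHom k (wittRel k) (E₁ k)) =
          UniversalEnvelopingAlgebra.ι k (wittElt k 1 le_rfl) ∧
        ψ (RingQuot.mkAlgHom k (wittRel k) (E₂ k)) =
          UniversalEnvelopingAlgebra.ι k (wittElt k 2 one_le_two) := by
  obtain ⟨φ, φ1, φ2⟩ := (isWittPair_ι k).exists_algHom k
  obtain ⟨θ, θ1, θ2⟩ := (isWittPair_mkAlgHom k).exists_enveloping_algHom k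
  have φθ : φ.comp θ = AlgHom.id k _ := enveloping_positiveWitt_hom_ext
    ((congrArg φ θ1).trans φ1) ((congrArg φ θ2).trans φ2)
  have θφ : θ.comp φ = AlgHom.id k _ := ringQuot_wittRel_hom_ext
    ((congrArg θ φ1).trans θ1) ((congrArg θ φ2).trans θ2)
  exact ⟨AlgEquiv.ofAlgHom φ θ φθ θφ, φ1, φ2⟩

end
end

section
/- In the free associative algebra k⟨E₁, E₂⟩, the element R₇ = [E₁,[E₁,[E₁,[E₁,[E₁,E₂]]]]] + 40[E₂,[E₂,[E₂,E₁]]] does not lie in the two-sided ideal generated by the element R₅ = [E₁,[E₁,[E₁,E₂]]] + 6[E₂,[E₂,E₁]] (here [a,b] = ab − ba denotes the ring commutator). -/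
set_option maxHeartbeats 1000000

/-!
Statement 4: In the free associative algebra k⟨E₁,E₂⟩, the element
R₇ = [E₁,[E₁,[E₁,[E₁,[E₁,E₂]]]]] + 40[E₂,[E₂,[E₂,E₁]]] does not lie in the two-sided ideal
generated by R₅ = [E₁,[E₁,[E₁,E₂]]] + 6[E₂,[E₂,E₁]], where [a,b] = ab − ba.
-/

noncomputable section

/-!
Matrices `!![a, u; 0, 0]` have commutators in the line spanned by `e₁₂`, on which such a matrix acts
by bracketing as multiplication by `a`. If `E₁` and `E₂` are represented by matrices of this shape
with upper left entries `a` and `b`, then `R₅` and `R₇` become `(a² - 6b) c` and `(a⁴ - 40b²) c`,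
where `c` is the image of `[E₁, E₂]`. On the curve `a² = 6b` the first vanishes and the second is
`-4b² c`.
-/

theorem map_cm {A B F : Type*} [Ring A] [Ring B] [FunLike F A B] [RingHomClass F A B]
    (f : F) (x y : A) : f (cm x y) = cm (f x) (f y) := by
  simp only [cm, map_sub, map_mul]

theorem map_eq_zero_of_mem_span_singleton {A B F : Type*} [Ring A] [Ring B] [FunLike F A B]
    [RingHomClass F A B] (f : F) {r x : A} (hr : f r = 0) (hx : x ∈ TwoSidedIdeal.span {r}) :
    f x = 0 := by
  have hle : TwoSidedIdeal.span {r} ≤ TwoSidedIdeal.ker f :=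
    TwoSidedIdeal.span_le.mpr <|
      Set.singleton_subset_iff.mpr <| (TwoSidedIdeal.mem_ker f).mpr hr
  exact (TwoSidedIdeal.mem_ker f).mp (hle hx)

theorem cm_firstRow {R : Type*} [CommRing R] (a b u v : R) :
    cm !![a, u; 0, 0] !![b, v; 0, 0] = Matrix.single 0 1 (a * v - b * u) := by
  ext i j
  fin_cases i <;> fin_cases j <;> simp [cm, mul_comm]

theorem cm_firstRow_single {R : Type*} [CommRing R] (a u c : R) :
    cm !![a, u; 0, 0] (Matrix.single 0 1 c) = Matrix.single 0 1 (a * c) := by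
  have hc : Matrix.single 0 1 c = !![0, c; 0, 0] := by
    ext i j
    fin_cases i <;> fin_cases j <;> simp
  rw [hc, cm_firstRow, zero_mul, sub_zero]

/-- The representation of the free algebra on two generators by the `2 × 2` matrices
`!![a, 1; 0, 0]` and `!![b, 0; 0, 0]`, which act on the line as the infinitesimal affine maps
`t ↦ a * t + 1` and `t ↦ b * t`. -/
def affineRep {R : Type*} [CommRing R] (a b : R) :
    FreeAlgebra R (Fin 2) →ₐ[R] Matrix (Fin 2) (Fin 2) R :=
  FreeAlgebra.lift R ![!![a, 1; 0, 0], !![b, 0; 0, 0]]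

section affineRep

variable {k : Type*} [Field k] (a b : k)

theorem affineRep_E₁ : affineRep a b (E₁ k) = !![a, 1; 0, 0] := by
  simp [affineRep, E₁]

theorem affineRep_E₂ : affineRep a b (E₂ k) = !![b, 0; 0, 0] := by
  simp [affineRep, E₂]

theorem affineRep_R₅ : affineRep a b (R₅ k) = Matrix.single 0 1 (-(b * (a ^ 2 - 6 * b))) := by
  simp only [R₅, ← Nat.ofNat_nsmul_eq_mul, map_add, map_nsmul, map_cm, affineRep_E₁, affineRep_E₂,
    cm_firstRow, cm_firstRow_single, Matrix.smul_single, ← Matrix.single_add]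
  congr 1
  ring

theorem affineRep_R₇ : affineRep a b (R₇ k) = Matrix.single 0 1 (-(b * (a ^ 4 - 40 * b ^ 2))) := by
  simp only [R₇, ← Nat.ofNat_nsmul_eq_mul, map_add, map_nsmul, map_cm, affineRep_E₁, affineRep_E₂,
    cm_firstRow, cm_firstRow_single, Matrix.smul_single, ← Matrix.single_add]
  congr 1
  ring

end affineRep

theorem exists_sq_eq_six_mul (k : Type*) [Field k] : ∃ a b : k, a ^ 2 = 6 * b ∧ b ≠ 0 := by
  by_cases h6 : (6 : k) = 0
  · exact ⟨0, 1, by simp [h6], one_ne_zero⟩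
  · exact ⟨6, 6, sq 6, h6⟩

theorem R7_not_mem_twoSidedIdeal_span_R5_general (k : Type*) [Field k] (h2 : (2 : k) ≠ 0) :
    R₇ k ∉ TwoSidedIdeal.span {R₅ k} := by
  intro hmem
  obtain ⟨a, b, hab, hb⟩ := exists_sq_eq_six_mul k
  have hR₅ : affineRep a b (R₅ k) = 0 := by
    rw [affineRep_R₅, hab, sub_self, mul_zero, neg_zero, Matrix.single_zero]
  have hR₇ : affineRep a b (R₇ k) = 0 := map_eq_zero_of_mem_span_singleton _ hR₅ hmem
  have hentry : -(b * (a ^ 4 - 40 * b ^ 2)) = 0 := by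
    simpa only [affineRep_R₇, Matrix.single_apply_same, Matrix.zero_apply] using congrFun₂ hR₇ 0 1
  have hcube : 2 ^ 2 * b ^ 3 = 0 := by
    linear_combination hentry + b * (a ^ 2 + 6 * b) * hab
  exact mul_ne_zero (pow_ne_zero 2 h2) (pow_ne_zero 3 hb) hcube

theorem R7_not_mem_twoSidedIdeal_span_R5 (k : Type*) [Field k] [CharZero k] :
    R₇ k ∉ TwoSidedIdeal.span {R₅ k} :=
  R7_not_mem_twoSidedIdeal_span_R5_general k two_ne_zero

end
end
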